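/- There exists an absolute constant C > 0 such that for every ν ∈ ℝⁿ \ {0}, every R > 0, and every w ∈ C_c^∞(ℝ × ℝⁿ) supported in ℝ × {x : |ν·x| < |ν|R}, one has |ν| ‖w‖_{L²(ℝ×ℝⁿ)} ≤ C R ‖(i∂_t + Δ + 2ν·∇)w‖_{L²(ℝ×ℝⁿ)}. -/

import Mathlib

open MeasureTheory Complex ComplexConjugate
open scoped RealInnerProductSpace

noncomputable section

/-- Spatial Laplacian of a complex-valued function on Euclidean space. -/
def spatialLap {n : ℕ} (f : EuclideanSpace ℝ (Fin n) → ℂ) (x : EuclideanSpace ℝ (Fin n)) : ℂ :=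
  ∑ i : Fin n,
    fderiv ℝ (fun y => fderiv ℝ f y (EuclideanSpace.single i (1 : ℝ))) x
      (EuclideanSpace.single i (1 : ℝ))

/-- The Schrödinger operator `i ∂ₜ + Δ`. -/
def schrodOp {n : ℕ} (u : ℝ × EuclideanSpace ℝ (Fin n) → ℂ)
    (p : ℝ × EuclideanSpace ℝ (Fin n)) : ℂ :=
  Complex.I * deriv (fun s => u (s, p.2)) p.1 + spatialLap (fun x => u (p.1, x)) p.2

/-!
On Schwartz functions `i∂ₜ + Δ` is formally self-adjoint, `2ν·∇` is formally skew-adjoint, and the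
two commute, so the cross terms in `‖(i∂ₜ + Δ + 2ν·∇)w‖²` cancel without any Fourier transform, and
what remains is at least `4‖ν·∇w‖²`. For the linear form `φ = ⟨ν, ·⟩ / |ν|`, which is bounded by `R`
on the slab, integrating `(ν·∇)(φ|w|²)` gives `|ν|‖w‖² = -2 Re ⟨φw, ν·∇w⟩`, and Cauchy–Schwarz turns
this into `|ν|‖w‖ ≤ 2R‖ν·∇w‖`. Hence the constant `C = 1`.
-/

open scoped SchwartzMap

section AdjointPair

variable {R M : Type*} [CommRing R] [AddCommGroup M] [Module R M] {B : LinearMap.BilinForm R M}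
  {S A A' : Module.End R M}

theorem isSelfAdjoint_mul_of_isSkewAdjoint_of_commute (hA : B.IsSkewAdjoint A)
    (hA' : B.IsSkewAdjoint A') (h : Commute A A') : B.IsSelfAdjoint (A * A') := fun x y => by
  calc B (A (A' x)) y = B x ((A' * A) y) := by
        rw [hA, hA']
        simp
    _ = B x ((A * A') y) := by rw [h.eq]

theorem apply_add_self_of_isSelfAdjoint_of_isSkewAdjoint (hS : B.IsSelfAdjoint S)
    (hA : B.IsSkewAdjoint A) (h : Commute S A) (x : M) :
    B ((S + A) x) ((S + A) x) = B (S x) (S x) + B (A x) (A x) := by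
  have hcross : B (A x) (S x) = -B (S x) (A x) := by
    calc B (A x) (S x) = -B x ((A * S) x) := by simp [hA x (S x)]
      _ = -B (S x) (A x) := by rw [← h.eq, hS, Module.End.mul_apply]
  simp only [LinearMap.add_apply, map_add, hcross]
  ring

end AdjointPair

section DirDeriv

variable {E F : Type*} [NormedAddCommGroup E] [NormedSpace ℝ E] [NormedAddCommGroup F]
  [NormedSpace ℝ F]

/-- The directional derivative `∂_{v}` as an element of the ring of linear operators on Schwartz
functions. -/
def dirDeriv (v : E) : Module.End ℝ 𝓢(E, F) :=
  (LineDeriv.lineDerivOpCLM ℝ 𝓢(E, F) v).toLinearMap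

theorem dirDeriv_apply (v : E) (f : 𝓢(E, F)) (p : E) : dirDeriv v f p = fderiv ℝ f p v := rfl

theorem dirDeriv_commute (u v : E) : Commute (dirDeriv (F := F) u) (dirDeriv v) := by
  have hsecond (a b : E) (f : 𝓢(E, F)) (p : E) :
      dirDeriv a (dirDeriv b f) p = fderiv ℝ (fderiv ℝ f) p a b := by
    change fderiv ℝ (fun q => fderiv ℝ f q b) p a = _
    have hdf : DifferentiableAt ℝ (fderiv ℝ f) p :=
      (SchwartzMap.fderivCLM ℝ E F f).differentiableAt
    rw [fderiv_clm_apply hdf (differentiableAt_const b)]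
    simp
  ext f p
  simp only [Module.End.mul_apply, hsecond]
  exact (f.smooth 2).contDiffAt.isSymmSndFDerivAt (by simp) u v

theorem I_smul_one_commute_dirDeriv (v : E) :
    Commute (I • (1 : Module.End ℝ 𝓢(E, ℂ))) (dirDeriv v) :=
  LinearMap.ext fun f => (LineDeriv.lineDerivOp_smul v I f).symm

theorem dirDeriv_smulLeftCLM (φ : E →L[ℝ] ℝ) (v : E) (f : 𝓢(E, F)) :
    dirDeriv v (SchwartzMap.smulLeftCLM F φ f)
      = SchwartzMap.smulLeftCLM F φ (dirDeriv v f) + φ v • f := by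
  ext p
  rw [dirDeriv_apply, SchwartzMap.smulLeftCLM_apply φ.hasTemperateGrowth,
    fderiv_fun_smul φ.differentiableAt f.differentiableAt]
  simp [SchwartzMap.smulLeftCLM_apply_apply φ.hasTemperateGrowth, dirDeriv_apply]

end DirDeriv

section SchwartzL2

variable {E F : Type*} [NormedAddCommGroup E] [NormedSpace ℝ E] [MeasurableSpace E]
  [NormedAddCommGroup F] [InnerProductSpace ℝ F]

section TemperateGrowth

variable [OpensMeasurableSpace E] [SecondCountableTopologyEither E F] {μ : Measure E}
  [μ.HasTemperateGrowth]

/-- The real `L²(μ)` inner product `∫ ⟪f, g⟫ ∂μ` as a bilinear form on Schwartz functions. -/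
def schwartzInner (μ : Measure E) [μ.HasTemperateGrowth] : LinearMap.BilinForm ℝ 𝓢(E, F) :=
  (innerₗ (Lp F 2 μ)).compl₁₂ (SchwartzMap.toLpCLM ℝ F 2 μ).toLinearMap
    (SchwartzMap.toLpCLM ℝ F 2 μ).toLinearMap

theorem schwartzInner_apply (f g : 𝓢(E, F)) :
    schwartzInner μ f g = ∫ p, inner ℝ (f p) (g p) ∂μ := by
  change inner ℝ (f.toLp 2 μ) (g.toLp 2 μ) = _
  rw [L2.inner_def]
  refine integral_congr_ae ?_
  filter_upwards [f.coeFn_toLp 2 μ, g.coeFn_toLp 2 μ] with p hf hg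
  rw [hf, hg]

theorem schwartzInner_self (f : 𝓢(E, F)) : schwartzInner μ f f = ∫ p, ‖f p‖ ^ 2 ∂μ := by
  simp only [schwartzInner_apply, real_inner_self_eq_norm_sq]

theorem schwartzInner_comm (f g : 𝓢(E, F)) : schwartzInner μ f g = schwartzInner μ g f := by
  simp only [schwartzInner_apply, real_inner_comm]

theorem schwartzInner_self_nonneg (f : 𝓢(E, F)) : 0 ≤ schwartzInner μ f f := by
  rw [schwartzInner_self]
  positivity

theorem isSkewAdjoint_I_smul_one :
    (schwartzInner μ).IsSkewAdjoint (I • (1 : Module.End ℝ 𝓢(E, ℂ))) := fun f g => by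
  simp only [schwartzInner_apply]
  congr 1 with p
  simp [Complex.inner, add_comm, sub_eq_add_neg]

theorem isSelfAdjoint_smulLeftCLM {g : E → ℝ} (hg : g.HasTemperateGrowth) :
    (schwartzInner μ).IsSelfAdjoint (SchwartzMap.smulLeftCLM F g) := fun f₁ f₂ => by
  simp only [schwartzInner_apply, SchwartzMap.smulLeftCLM_apply_apply hg, real_inner_smul_left,
    real_inner_smul_right]

theorem schwartzInner_smulLeftCLM_self_le {g : E → ℝ} (hg : g.HasTemperateGrowth) {M : ℝ}
    {f : 𝓢(E, F)} (hM : ∀ p ∈ Function.support f, |g p| ≤ M) :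
    schwartzInner μ (SchwartzMap.smulLeftCLM F g f) (SchwartzMap.smulLeftCLM F g f)
      ≤ M ^ 2 * schwartzInner μ f f := by
  have hint (h : 𝓢(E, F)) : Integrable (fun p => ‖h p‖ ^ 2) μ :=
    (h.memLp 2 μ).integrable_norm_pow two_ne_zero
  rw [schwartzInner_self, schwartzInner_self, ← integral_const_mul]
  refine integral_mono (hint _) ((hint f).const_mul _) fun p => ?_
  by_cases hp : f p = 0
  · simp [SchwartzMap.smulLeftCLM_apply_apply hg, hp]
  · simp only [SchwartzMap.smulLeftCLM_apply_apply hg, norm_smul, mul_pow, Real.norm_eq_abs]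
    gcongr
    exact hM p hp

end TemperateGrowth

section Haar

variable [FiniteDimensional ℝ E] [BorelSpace E] {μ : Measure E} [μ.IsAddHaarMeasure]

theorem isSkewAdjoint_dirDeriv (v : E) :
    (schwartzInner μ).IsSkewAdjoint (dirDeriv (F := F) v) := fun f g => by
  have ibp : ∫ p, inner ℝ (f p) (dirDeriv v g p) ∂μ = -∫ p, inner ℝ (dirDeriv v f p) (g p) ∂μ :=
    SchwartzMap.integral_bilinear_lineDerivOp_right_eq_neg_left f g (innerSL ℝ) v
  rw [Pi.neg_apply, map_neg, schwartzInner_apply, schwartzInner_apply, ibp, neg_neg]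

theorem apply_mul_schwartzInner_self (φ : E →L[ℝ] ℝ) (v : E) (f : 𝓢(E, F)) :
    φ v * schwartzInner μ f f
      = -2 * schwartzInner μ (SchwartzMap.smulLeftCLM F φ f) (dirDeriv v f) := by
  have ibp := isSkewAdjoint_dirDeriv (μ := μ) v (SchwartzMap.smulLeftCLM F φ f) f
  have hswap : schwartzInner μ (SchwartzMap.smulLeftCLM F φ (dirDeriv v f)) f
      = schwartzInner μ (SchwartzMap.smulLeftCLM F φ f) (dirDeriv v f) := by
    rw [isSelfAdjoint_smulLeftCLM φ.hasTemperateGrowth, schwartzInner_comm]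
  rw [dirDeriv_smulLeftCLM, map_add, LinearMap.add_apply, hswap, map_smul, LinearMap.smul_apply,
    smul_eq_mul, Pi.neg_apply, map_neg] at ibp
  linarith

theorem sq_apply_mul_schwartzInner_self_le_dirDeriv {φ : E →L[ℝ] ℝ} {M : ℝ} {f : 𝓢(E, F)}
    (hM : ∀ p ∈ Function.support f, |φ p| ≤ M) (v : E) :
    φ v ^ 2 * schwartzInner μ f f ≤ 4 * M ^ 2 * schwartzInner μ (dirDeriv v f) (dirDeriv v f) := by
  let N := schwartzInner μ f f
  let D := schwartzInner μ (dirDeriv v f) (dirDeriv v f)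
  have hN : 0 ≤ N := schwartzInner_self_nonneg _
  have hD : 0 ≤ D := schwartzInner_self_nonneg _
  rcases hN.eq_or_lt with hN | hN
  · calc φ v ^ 2 * N = 0 := by rw [← hN, mul_zero]
      _ ≤ 4 * M ^ 2 * D := by positivity
  refine le_of_mul_le_mul_right ?_ hN
  let φf := SchwartzMap.smulLeftCLM F φ f
  calc φ v ^ 2 * N * N = (φ v * N) ^ 2 := by ring
    _ = 4 * schwartzInner μ φf (dirDeriv v f) ^ 2 := by
        rw [show φ v * N = _ from apply_mul_schwartzInner_self φ v f]
        ring
    _ ≤ 4 * (schwartzInner μ φf φf * D) := by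
        gcongr
        exact (schwartzInner μ).apply_sq_le_of_symm schwartzInner_self_nonneg
          ⟨schwartzInner_comm⟩ _ _
    _ ≤ 4 * (M ^ 2 * N * D) := by
        gcongr
        exact schwartzInner_smulLeftCLM_self_le φ.hasTemperateGrowth hM
    _ = 4 * M ^ 2 * D * N := by ring

theorem sq_apply_mul_schwartzInner_self_le {S : Module.End ℝ 𝓢(E, F)}
    (hS : (schwartzInner μ).IsSelfAdjoint S) {v : E} (hSv : Commute S (dirDeriv v))
    {φ : E →L[ℝ] ℝ} {M : ℝ} {f : 𝓢(E, F)} (hM : ∀ p ∈ Function.support f, |φ p| ≤ M) :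
    φ v ^ 2 * schwartzInner μ f f
      ≤ M ^ 2 * schwartzInner μ (S f + (2 : ℝ) • dirDeriv v f) (S f + (2 : ℝ) • dirDeriv v f) := by
  have hskew : (schwartzInner μ).IsSkewAdjoint ((2 : ℝ) • dirDeriv (F := F) v) :=
    fun x y => by simp [isSkewAdjoint_dirDeriv v x y]
  have plancherel := apply_add_self_of_isSelfAdjoint_of_isSkewAdjoint hS hskew
    (hSv.smul_right (2 : ℝ)) f
  calc φ v ^ 2 * schwartzInner μ f f
      ≤ 4 * M ^ 2 * schwartzInner μ (dirDeriv v f) (dirDeriv v f) :=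
        sq_apply_mul_schwartzInner_self_le_dirDeriv hM v
    _ = M ^ 2 * schwartzInner μ (((2 : ℝ) • dirDeriv v) f) (((2 : ℝ) • dirDeriv v) f) := by
        simp only [LinearMap.smul_apply, map_smul, smul_eq_mul]
        ring
    _ ≤ _ := by
        rw [← LinearMap.smul_apply, ← LinearMap.add_apply, plancherel]
        gcongr
        exact le_add_of_nonneg_left (schwartzInner_self_nonneg _)

end Haar

end SchwartzL2

section Schrodinger

variable {E : Type*} [NormedAddCommGroup E] [NormedSpace ℝ E] {ι : Type*}
  [Fintype ι]

/-- The Schrödinger operator `i ∂_τ + ∑ i, ∂_{e i}²` on Schwartz functions, with time direction `τ`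
and space directions `e i`. -/
def schwartzSchrodinger (τ : E) (e : ι → E) : Module.End ℝ 𝓢(E, ℂ) :=
  I • 1 * dirDeriv τ + ∑ i, dirDeriv (e i) * dirDeriv (e i)

theorem isSelfAdjoint_schwartzSchrodinger [FiniteDimensional ℝ E] [MeasurableSpace E]
    [BorelSpace E] {μ : Measure E} [μ.IsAddHaarMeasure] (τ : E) (e : ι → E) :
    (schwartzInner μ).IsSelfAdjoint (schwartzSchrodinger τ e) := by
  have htime := isSelfAdjoint_mul_of_isSkewAdjoint_of_commute (isSkewAdjoint_I_smul_one (μ := μ))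
    (isSkewAdjoint_dirDeriv τ) (I_smul_one_commute_dirDeriv τ)
  have hspace (i : ι) := isSelfAdjoint_mul_of_isSkewAdjoint_of_commute
    (isSkewAdjoint_dirDeriv (F := ℂ) (μ := μ) (e i)) (isSkewAdjoint_dirDeriv (e i)) (.refl _)
  exact (schwartzInner μ).selfAdjointSubmodule.add_mem htime
    ((schwartzInner μ).selfAdjointSubmodule.sum_mem fun i _ => hspace i)

theorem schwartzSchrodinger_commute_dirDeriv (τ : E) (e : ι → E) (v : E) :
    Commute (schwartzSchrodinger τ e) (dirDeriv v) :=
  ((I_smul_one_commute_dirDeriv v).mul_left (dirDeriv_commute τ v)).add_left <|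
    Commute.sum_left _ _ _ fun i _ => (dirDeriv_commute (e i) v).mul_left (dirDeriv_commute (e i) v)

end Schrodinger

section Slices

variable {F : Type*} [NormedAddCommGroup F] [NormedSpace ℝ F] (w : 𝓢(ℝ × F, ℂ)) (t : ℝ) (x : F)

theorem fderiv_slice_right (v : F) :
    fderiv ℝ (fun y => w (t, y)) x v = dirDeriv (0, v) w (t, x) := by
  have h := (w.hasFDerivAt (t, x)).comp x (hasFDerivAt_prodMk_right t x)
  exact DFunLike.congr_fun h.fderiv v

theorem deriv_slice_left : deriv (fun s => w (s, x)) t = dirDeriv (1, 0) w (t, x) := by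
  have h := (w.hasFDerivAt (t, x)).comp t (hasFDerivAt_prodMk_left (𝕜 := ℝ) t x)
  exact h.hasDerivAt.deriv

end Slices

theorem schrodOp_eq_schwartzSchrodinger {n : ℕ} (w : 𝓢(ℝ × EuclideanSpace ℝ (Fin n), ℂ)) :
    schrodOp w
      = schwartzSchrodinger (1, 0) (fun i => (0, EuclideanSpace.single i (1 : ℝ))) w := by
  ext p
  simp [schrodOp, spatialLap, deriv_slice_left, fderiv_slice_right, schwartzSchrodinger]

theorem stmt7_general {n : ℕ} (ν : EuclideanSpace ℝ (Fin n)) {R : ℝ} (hR : 0 ≤ R)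
    (w : 𝓢(ℝ × EuclideanSpace ℝ (Fin n), ℂ))
    (hw : Function.support w ⊆ {p : ℝ × EuclideanSpace ℝ (Fin n) | |⟪ν, p.2⟫| ≤ ‖ν‖ * R}) :
    ‖ν‖ * √(∫ p, ‖w p‖ ^ 2)
      ≤ R * √(∫ p, ‖schrodOp w p + 2 * fderiv ℝ (fun x => w (p.1, x)) p.2 ν‖ ^ 2) := by
  have : (volume : Measure (ℝ × EuclideanSpace ℝ (Fin n))).IsAddHaarMeasure :=
    inferInstanceAs (Measure.prod volume volume).IsAddHaarMeasure
  let φ : ℝ × EuclideanSpace ℝ (Fin n) →L[ℝ] ℝ := ‖ν‖⁻¹ • (innerSL ℝ ν ∘L .snd ℝ ℝ _)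
  have hφν : φ (0, ν) = ‖ν‖ := by
    calc φ (0, ν) = ‖ν‖⁻¹ * (‖ν‖ * ‖ν‖) := by simp [φ, sq]
      _ = ‖ν‖ := by rw [mul_comm, mul_self_mul_inv]
  have hφR : ∀ p ∈ Function.support w, |φ p| ≤ R := fun p hp => by
    have hp' : |⟪ν, p.2⟫| / ‖ν‖ ≤ R :=
      div_le_of_le_mul₀ (norm_nonneg ν) hR ((hw hp).trans_eq (mul_comm _ _))
    simpa [φ, abs_mul, div_eq_inv_mul] using hp'
  have key := sq_apply_mul_schwartzInner_self_le (μ := volume)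
    (isSelfAdjoint_schwartzSchrodinger (1, 0) fun i => (0, EuclideanSpace.single i (1 : ℝ)))
    (schwartzSchrodinger_commute_dirDeriv _ _ (0, ν)) hφR
  simp only [schwartzInner_self, hφν, add_apply, smul_apply, Complex.real_smul,
    Complex.ofReal_ofNat] at key
  simp only [schrodOp_eq_schwartzSchrodinger, fderiv_slice_right]
  simpa only [Real.sqrt_mul (sq_nonneg _), Real.sqrt_sq (norm_nonneg ν), Real.sqrt_sq hR]
    using Real.sqrt_le_sqrt key

/-- there is an absolute constant `C > 0` such that
`|ν| ‖w‖_{L²} ≤ C R ‖(i∂ₜ + Δ + 2ν·∇)w‖_{L²}` for smooth compactly supported `w`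
supported in the slab `ℝ × {x : |ν·x| < |ν| R}`. -/
theorem stmt7 :
    ∃ C : ℝ, 0 < C ∧
      ∀ (n : ℕ) (ν : EuclideanSpace ℝ (Fin n)), ν ≠ 0 → ∀ R : ℝ, 0 < R →
        ∀ w : ℝ × EuclideanSpace ℝ (Fin n) → ℂ, ContDiff ℝ (⊤ : ℕ∞) w → HasCompactSupport w →
          (Function.support w ⊆ {p : ℝ × EuclideanSpace ℝ (Fin n) | |(⟪ν, p.2⟫ : ℝ)| < ‖ν‖ * R}) →
          ‖ν‖ * Real.sqrt (∫ p : ℝ × EuclideanSpace ℝ (Fin n), ‖w p‖ ^ 2)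
            ≤ C * R * Real.sqrt
                (∫ p : ℝ × EuclideanSpace ℝ (Fin n),
                  ‖schrodOp w p + 2 * fderiv ℝ (fun x => w (p.1, x)) p.2 ν‖ ^ 2) :=
  ⟨1, one_pos, fun n ν _ R hR w hw hwc hsupp => by
    rw [one_mul]
    exact stmt7_general ν hR.le (hwc.toSchwartzMap hw)
      (hsupp.trans (Set.ofPred_subset_ofPred.2 fun _ => le_of_lt))⟩

end
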